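/- arXiv:1807.06465 — 2 statements merged into one kernel-verified Lean document; each statement's English description precedes it below -/
import Mathlib

section
/- Let d ≥ 3 be a fixed integer. There exists δ₀ > 0 such that for every δ ∈ (0, δ₀) there exists a constant c(δ) > 0 with the following property: for every prime p with gcd(p,d) = 1 and every vector 𝔫 = (𝔫_0,…,𝔫_{p−1}) ∈ ℝ^p with 𝔫_j ≥ 0 and Σ_j 𝔫_j = 1, if max_{0≤j≤p−1} |𝔫_j − 1/p| > δ/p and 𝔫_0 < 1 − δ/p, then I(𝔫) ≤ −c(δ)/p, where I(𝔫) = (d−1)·ln p + (d−1)·Σ_{j=0}^{p−1} 𝔫_j·ln 𝔫_j + inf_{t ∈ ℝ^p} ( ln( p^{−(d−1)} Σ_{a ∈ Z_{d,p}} exp(⟨t, Φ(a)⟩) ) − d·⟨t, 𝔫⟩ ), with the convention 0·ln 0 = 0. -/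
open Finset

/-- The counting map `Φ` : the `j`-th coordinate of `Φ(a)` is `#{r : a r = j}`. -/
def Phi {d p : ℕ} (a : Fin d → ZMod p) (j : ZMod p) : ℕ :=
  (Finset.univ.filter (fun r : Fin d => a r = j)).card


/-- shifted correlation functional -/
noncomputable def Sc {p : ℕ} [Fact p.Prime] (f : ZMod p → ℝ) (σ : ZMod p) : ℝ :=
  ∑ x, f x ^ 2 * ∑ z, f z * f (-(x + σ) - z)

lemma sum_refl_sq {p : ℕ} [Fact p.Prime] (h : ZMod p → ℝ) (b : ZMod p) :
    ∑ z, h (b - z) = ∑ z, h z :=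
  (Equiv.subLeft b).sum_comp h

lemma sum_sq_diff {p : ℕ} [Fact p.Prime] (f : ZMod p → ℝ) (hf : ∑ x, f x ^ 2 = 1) (b : ZMod p) :
    ∑ z, (f z - f (b - z)) ^ 2 = 2 - 2 * ∑ z, f z * f (b - z) := by
  have h1 := sum_refl_sq (fun z => f z ^ 2) b
  have : ∀ z, (f z - f (b - z)) ^ 2 = f z ^ 2 + f (b - z) ^ 2 - 2 * (f z * f (b - z)) := by
    intro z; ring
  simp only [this, sum_sub_distrib, sum_add_distrib, ← mul_sum]
  beta_reduce at h1
  rw [h1, hf]; ring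

lemma Sc_eq {p : ℕ} [Fact p.Prime] (f : ZMod p → ℝ) (hf : ∑ x, f x ^ 2 = 1) (σ : ZMod p) :
    2 * (1 - Sc f σ) = ∑ x, f x ^ 2 * ∑ z, (f z - f (-(x + σ) - z)) ^ 2 := by
  simp only [sum_sq_diff f hf, mul_sub, sum_sub_distrib, Sc, ← sum_mul, hf]
  simp only [mul_left_comm _ (2:ℝ), ← mul_sum]
  ring

/-- near a point mass -/
lemma Sc_point {p : ℕ} [Fact p.Prime] (f : ZMod p → ℝ) (hf0 : ∀ x, 0 ≤ f x)
    (hf : ∑ x, f x ^ 2 = 1) (σ x0 : ZMod p) (hx : 99 / 100 ≤ f x0 ^ 2) :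
    Sc f σ ≤ 1 - (1 - f (-σ - 2 * x0) ^ 2) / 8 := by
  have hE := Sc_eq f hf σ
  have hsmall : ∀ y, y ≠ x0 → f y ≤ 1 / 10 := by
    intro y hy
    have : f x0 ^ 2 + f y ^ 2 ≤ 1 := by
      rw [← hf, ← sum_pair (f := fun x => f x ^ 2) hy.symm]
      exact sum_le_sum_of_subset_of_nonneg (subset_univ _) (fun _ _ _ => sq_nonneg _)
    nlinarith [hf0 y]
  have hbig : 9 / 10 ≤ f x0 := by nlinarith [hf0 x0]
  have key : ∀ x, x ≠ -σ - 2 * x0 → 1 / 4 ≤ ∑ z, (f z - f (-(x + σ) - z)) ^ 2 := by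
    intro x hxx
    have h1 : -(x + σ) - x0 ≠ x0 := by
      intro h; apply hxx; linear_combination -h
    have h2 := hsmall _ h1
    calc (1:ℝ) / 4 ≤ (f x0 - f (-(x + σ) - x0)) ^ 2 := by nlinarith [hf0 (-(x + σ) - x0)]
      _ ≤ _ := single_le_sum (f := fun z => (f z - f (-(x + σ) - z)) ^ 2)
        (fun _ _ => sq_nonneg _) (mem_univ x0)
  have h3 : (1 - f (-σ - 2 * x0) ^ 2) * (1/4) ≤
      ∑ x, f x ^ 2 * ∑ z, (f z - f (-(x + σ) - z)) ^ 2 := by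
    have e : 1 - f (-σ - 2 * x0) ^ 2 = ∑ x ∈ univ.erase (-σ - 2 * x0), f x ^ 2 := by
      rw [← hf, ← add_sum_erase univ (fun x => f x ^ 2) (mem_univ (-σ - 2 * x0))]; ring
    rw [e, sum_mul]
    refine (sum_le_sum fun x hx => ?_).trans (sum_le_sum_of_subset_of_nonneg (subset_univ _) ?_)
    · exact mul_le_mul_of_nonneg_left (key x (ne_of_mem_erase hx)) (sq_nonneg _)
    · intro x _ _
      exact mul_nonneg (sq_nonneg _) (sum_nonneg fun _ _ => sq_nonneg _)
  linarith

/-- translation correlations -/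
lemma trans_corr {p : ℕ} [Fact p.Prime] (f : ZMod p → ℝ)
    (hf : ∑ x, f x ^ 2 = 1) (x y σ : ZMod p) (θ : ℝ)
    (hx : ∑ z, (f z - f (-(x + σ) - z)) ^ 2 ≤ θ)
    (hy : ∑ z, (f z - f (-(y + σ) - z)) ^ 2 ≤ θ) :
    1 - 2 * θ ≤ ∑ w, f w * f (w + (x - y)) := by
  have h1 : ∑ z, (f (-(x + σ) - z) - f (-(y + σ) - z)) ^ 2 ≤ 4 * θ := by
    have : ∑ z, (f (-(x + σ) - z) - f (-(y + σ) - z)) ^ 2 ≤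
        ∑ z, (2 * (f z - f (-(x + σ) - z)) ^ 2 + 2 * (f z - f (-(y + σ) - z)) ^ 2) := by
      apply sum_le_sum; intro z _
      nlinarith [sq_nonneg (f z - f (-(x + σ) - z) + (f z - f (-(y + σ) - z)))]
    rw [sum_add_distrib, ← mul_sum, ← mul_sum] at this
    linarith
  have h2 : ∑ z, (f (-(x + σ) - z) - f (-(y + σ) - z)) ^ 2 = ∑ w, (f w - f (w + (x - y))) ^ 2 := by
    rw [← sum_refl_sq (fun w => (f w - f (w + (x - y))) ^ 2) (-(x + σ))]
    apply sum_congr rfl; intro z _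
    congr 3; ring
  have h3 : ∑ w, f (w + (x - y)) ^ 2 = 1 := by
    rw [← hf]; exact Equiv.sum_comp (Equiv.addRight (x - y)) (fun w => f w ^ 2)
  have : ∀ z, (f z - f (z + (x - y))) ^ 2 =
      f z ^ 2 + f (z + (x - y)) ^ 2 - 2 * (f z * f (z + (x - y))) := by
    intro z; ring
  rw [h2] at h1
  simp only [this, sum_sub_distrib, sum_add_distrib, ← mul_sum, hf, h3] at h1
  linarith

lemma sum_trans {p : ℕ} [Fact p.Prime] (f : ZMod p → ℝ) :
    ∑ g, ∑ w, f w * f (w + g) = (∑ w, f w) ^ 2 := by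
  rw [sum_comm, sq, sum_mul]
  apply sum_congr rfl; intro w _
  rw [← mul_sum]
  congr 1
  exact Equiv.sum_comp (Equiv.addLeft w) f

/-- near uniform -/
lemma Sc_unif {p : ℕ} [Fact p.Prime] (f : ZMod p → ℝ) (hf0 : ∀ x, 0 ≤ f x)
    (hf : ∑ x, f x ^ 2 = 1) (σ : ZMod p) (hs : (98 / 100) * (p : ℝ) ≤ (∑ w, f w) ^ 2) :
    Sc f σ ≤ 1 - (1/2) * (1 - (∑ w, f w) ^ 2 / p) := by
  have hp : (0:ℝ) < p := by exact_mod_cast (Fact.out : p.Prime).pos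
  set M := ∑ w, f w with hM
  set μ : ℝ := M / p with hμ
  set V : ℝ := 1 - M ^ 2 / p with hV
  have hM0 : 0 ≤ M := sum_nonneg fun _ _ => hf0 _
  have hcard : ∑ _x : ZMod p, (1:ℝ) = p := by simp [ZMod.card]
  have hconst : ∀ c : ℝ, ∑ _x : ZMod p, c = p * c := by intro c; simp [ZMod.card]
  set h : ZMod p → ℝ := fun x => f x - μ with hh
  have hpμ : p * μ = M := by rw [hμ]; field_simp
  have hh0 : ∑ x, h x = 0 := by
    simp only [hh, sum_sub_distrib, hconst, hpμ]; rw [← hM]; ring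
  have hh2 : ∑ x, h x ^ 2 = V := by
    have : ∀ x, h x ^ 2 = f x ^ 2 - 2 * μ * f x + μ ^ 2 := by intro x; simp only [hh]; ring
    simp only [this, sum_add_distrib, sum_sub_distrib, ← mul_sum, hconst, hf, ← hM]
    rw [hV, hμ]; field_simp; ring
  have hV0 : 0 ≤ V := by rw [← hh2]; exact sum_nonneg fun _ _ => sq_nonneg _
  have hMp : M ^ 2 ≤ p := by
    have : M ^ 2 / p ≤ 1 := by rw [hV] at hV0; linarith
    rwa [div_le_one hp] at this
  -- correlations
  have hC : ∀ b, ∑ z, f z * f (b - z) = p * μ ^ 2 + ∑ z, h z * h (b - z) := by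
    intro b
    have e : ∀ z, f z * f (b - z) = h z * h (b - z) + μ * h z + μ * h (b - z) + μ ^ 2 := by
      intro z; simp only [hh]; ring
    simp only [e, sum_add_distrib, ← mul_sum, hconst, hh0]
    rw [sum_refl_sq h b, hh0]; ring
  have hcb : ∀ b, |∑ z, h z * h (b - z)| ≤ V := by
    intro b
    have e1 := sum_refl_sq (fun z => h z ^ 2) b
    beta_reduce at e1
    calc |∑ z, h z * h (b - z)| ≤ ∑ z, |h z * h (b - z)| := abs_sum_le_sum_abs _ _
      _ ≤ ∑ z, (1/2 * h z ^ 2 + 1/2 * h (b - z) ^ 2) := by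
          apply sum_le_sum; intro z _
          rw [abs_le]; constructor <;>
          nlinarith [sq_nonneg (h z + h (b - z)), sq_nonneg (h z - h (b - z))]
      _ = V := by rw [sum_add_distrib, ← mul_sum, ← mul_sum, e1, hh2]; ring
  have hz : ∑ x, ∑ z, h z * h (-(x + σ) - z) = 0 := by
    rw [sum_comm]
    apply sum_eq_zero; intro z _
    rw [← mul_sum]
    have : ∑ x, h (-(x + σ) - z) = ∑ x, h x := by
      rw [← sum_refl_sq h (-σ - z)]
      apply sum_congr rfl; intro x _; congr 1; ring
    rw [this, hh0, mul_zero]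
  -- l1 distance
  have hl1 : ∑ x, |f x ^ 2 - 1 / p| ≤ 1/2 := by
    set g : ℝ := 1 / Real.sqrt p with hg
    have hsp : 0 < Real.sqrt p := Real.sqrt_pos.mpr hp
    have hsp2 : Real.sqrt p ^ 2 = p := Real.sq_sqrt hp.le
    have hg0 : 0 < g := by positivity
    have hg2 : g ^ 2 = 1 / p := by rw [hg, div_pow, hsp2]; simp
    have hpg : p * g ^ 2 = 1 := by rw [hg2]; field_simp
    have hgM : 98/100 ≤ g * M := by
      have a1 : (g * M) ^ 2 ≤ 1 := by rw [mul_pow]; nlinarith [sq_nonneg g]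
      have a2 : 98/100 ≤ (g * M) ^ 2 := by rw [mul_pow]; nlinarith [sq_nonneg g]
      nlinarith [mul_nonneg hg0.le hM0]
    have hgM1 : g * M ≤ 1 := by
      have a1 : (g * M) ^ 2 ≤ 1 := by rw [mul_pow]; nlinarith [sq_nonneg g]
      nlinarith [mul_nonneg hg0.le hM0]
    calc ∑ x, |f x ^ 2 - 1 / p| ≤ ∑ x, (5 * (f x ^2 - 2 * g * f x + g^2) + 1/20 * (f x ^2 + 2 * g * f x + g^2)) := by
          apply sum_le_sum; intro x _
          rw [← hg2, abs_le]; constructor <;>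
          nlinarith [sq_nonneg (10 * (f x - g) + (f x + g)), sq_nonneg (10 * (f x - g) - (f x + g))]
      _ = 5 * (2 - 2 * (g * M)) + 1/20 * (2 + 2 * (g * M)) := by
          simp only [sum_add_distrib, sum_sub_distrib, ← mul_sum, hconst, hf, ← hM, hpg]; ring
      _ ≤ 1/2 := by linarith
  have hS : Sc f σ = p * μ ^ 2 + ∑ x, (f x ^ 2 - 1 / p) * ∑ z, h z * h (-(x + σ) - z) := by
    simp only [Sc, hC, mul_add, sub_mul, sum_add_distrib, sum_sub_distrib, ← sum_mul, hf]
    rw [← mul_sum, hz]; ring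
  have hb : ∑ x, (f x ^ 2 - 1 / p) * ∑ z, h z * h (-(x + σ) - z) ≤ 1/2 * V := by
    calc _ ≤ ∑ x, |f x ^ 2 - 1 / p| * V := by
          apply sum_le_sum; intro x _
          refine (le_abs_self _).trans ?_
          rw [abs_mul]
          exact mul_le_mul_of_nonneg_left (hcb _) (abs_nonneg _)
      _ = (∑ x, |f x ^ 2 - 1 / p|) * V := by rw [sum_mul]
      _ ≤ _ := mul_le_mul_of_nonneg_right hl1 hV0
  have : p * μ ^ 2 = 1 - V := by rw [hV, hμ]; field_simp; ring
  rw [hS, this]; linarith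

lemma unif_dev {p : ℕ} [Fact p.Prime] (f : ZMod p → ℝ) (hf0 : ∀ x, 0 ≤ f x)
    (hf : ∑ x, f x ^ 2 = 1) (δ : ℝ) (hδ0 : 0 < δ) (hδ : δ < 1) (j : ZMod p)
    (hj : δ / p < |f j ^ 2 - 1 / p|) :
    δ ^ 2 / 18 / p ≤ 1 - (∑ w, f w) ^ 2 / p := by
  have hp : (0:ℝ) < p := by exact_mod_cast (Fact.out : p.Prime).pos
  have hconst : ∀ c : ℝ, ∑ _x : ZMod p, c = p * c := by intro c; simp [ZMod.card]
  set M := ∑ w, f w with hM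
  have hM0 : 0 ≤ M := sum_nonneg fun _ _ => hf0 _
  set g : ℝ := 1 / Real.sqrt p with hg
  have hsp : 0 < Real.sqrt p := Real.sqrt_pos.mpr hp
  have hsp2 : Real.sqrt p ^ 2 = p := Real.sq_sqrt hp.le
  have hg0 : 0 < g := by positivity
  have hg2 : g ^ 2 = 1 / p := by rw [hg, div_pow, hsp2]; simp
  have hpg : p * g ^ 2 = 1 := by rw [hg2]; field_simp
  have hd : ∑ x, (f x - g) ^ 2 = 2 - 2 * (g * M) := by
    have : ∀ x, (f x - g) ^ 2 = f x ^ 2 - 2 * g * f x + g ^ 2 := by intro x; ring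
    simp only [this, sum_add_distrib, sum_sub_distrib, ← mul_sum, hconst, hf, ← hM, hpg]; ring
  have hsing : (f j - g) ^ 2 ≤ 2 - 2 * (g * M) := by
    rw [← hd]
    exact single_le_sum (f := fun z => (f z - g) ^ 2) (fun _ _ => sq_nonneg _) (mem_univ j)
  have hgM1 : g * M ≤ 1 := by nlinarith [sq_nonneg (f j - g)]
  have hMV : 1 - M ^ 2 / p = 1 - (g * M) ^ 2 := by rw [mul_pow, hg2]; ring
  have hgM0 : 0 ≤ g * M := mul_nonneg hg0.le hM0
  have e1 : δ / p = δ * g ^ 2 := by rw [hg2]; ring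
  have e2 : δ ^ 2 / 18 / p = δ ^ 2 * g ^ 2 / 18 := by rw [hg2]; ring
  rw [e1, ← hg2] at hj
  rw [hMV, e2]
  have hfj : δ ^ 2 * g ^ 2 / 9 ≤ (f j - g) ^ 2 := by
    have e3 : |f j ^ 2 - g ^ 2| = |f j - g| * (f j + g) := by
      rw [← abs_of_nonneg (add_nonneg (hf0 j) hg0.le), ← abs_mul]; congr 1; ring
    rw [e3] at hj
    rw [← sq_abs (f j - g)]
    have : δ * g / 3 ≤ |f j - g| := by
      by_contra hc
      push Not at hc
      have h1 := le_abs_self (f j - g)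
      have h2 : f j ≤ 2 * g := by nlinarith
      have h3 : |f j - g| * (f j + g) ≤ |f j - g| * (3 * g) :=
        mul_le_mul_of_nonneg_left (by linarith) (abs_nonneg _)
      nlinarith
    have h0 : 0 ≤ δ * g / 3 := by positivity
    nlinarith
  nlinarith

open Pointwise in
/-- structure dichotomy -/
lemma dichotomy {p : ℕ} [Fact p.Prime] (f : ZMod p → ℝ) (hf0 : ∀ x, 0 ≤ f x)
    (hf : ∑ x, f x ^ 2 = 1) (σ : ZMod p) (hS : 1 - Sc f σ ≤ 1 / 20000) :
    (∃ x0, 99 / 100 ≤ f x0 ^ 2) ∨ (98 / 100) * (p : ℝ) ≤ (∑ w, f w) ^ 2 := by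
  have hE := Sc_eq f hf σ
  set Q : ZMod p → ℝ := fun x => ∑ z, (f z - f (-(x + σ) - z)) ^ 2 with hQ
  have hQ0 : ∀ x, 0 ≤ Q x := fun x => sum_nonneg fun _ _ => sq_nonneg _
  set A : Finset (ZMod p) := univ.filter (fun x => Q x ≤ 1 / 100) with hA
  have hAc : ∑ x ∈ Aᶜ, f x ^ 2 ≤ 1 / 100 := by
    have h1 : ∑ x ∈ Aᶜ, f x ^ 2 * (1 / 100) ≤ ∑ x, f x ^ 2 * Q x := by
      refine (sum_le_sum fun x hx => ?_).trans (sum_le_sum_of_subset_of_nonneg (subset_univ _) ?_)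
      · apply mul_le_mul_of_nonneg_left _ (sq_nonneg _)
        simp only [hA, mem_compl, mem_filter, mem_univ, true_and, not_le] at hx
        exact hx.le
      · intro x _ _
        exact mul_nonneg (sq_nonneg _) (hQ0 x)
    rw [← sum_mul] at h1
    linarith
  have hAm : 99 / 100 ≤ ∑ x ∈ A, f x ^ 2 := by
    have := sum_add_sum_compl A (fun x => f x ^ 2)
    rw [hf] at this; linarith
  have hne : A.Nonempty := by
    rw [nonempty_iff_ne_empty]; intro h; rw [h] at hAm; norm_num at hAm
  have hcor : ∀ g ∈ A - A, 98 / 100 ≤ ∑ w, f w * f (w + g) := by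
    intro g hg
    obtain ⟨x, hx, y, hy, rfl⟩ := mem_sub.mp hg
    have h1 : Q x ≤ 1/100 := (mem_filter.mp hx).2
    have h2 : Q y ≤ 1/100 := (mem_filter.mp hy).2
    have := trans_corr f hf x y σ _ h1 h2
    linarith
  have hCD : min p (2 * #A - 1) ≤ #(A - A) := by
    have := ZMod.cauchy_davenport (Fact.out : p.Prime) hne hne.neg
    rw [card_neg, ← sub_eq_add_neg] at this
    rwa [two_mul]
  rcases le_total p (2 * #A - 1) with hc | hc
  · right
    rw [min_eq_left hc] at hCD
    have huniv : A - A = univ := by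
      apply eq_univ_of_card
      rw [ZMod.card]
      refine le_antisymm ?_ hCD
      have := card_le_univ (A - A); rwa [ZMod.card] at this
    rw [← sum_trans f]
    calc (98 / 100) * (p : ℝ) = ∑ _g : ZMod p, (98/100 : ℝ) := by simp [ZMod.card]; ring
      _ ≤ _ := sum_le_sum fun g _ => hcor g (by rw [huniv]; exact mem_univ _)
  · left
    rw [min_eq_right hc] at hCD
    set F : ZMod p → ℝ := fun x => if x ∈ A then f x else 0 with hF
    have hF0 : ∀ x, 0 ≤ F x := by intro x; simp only [hF]; split_ifs; exacts [hf0 x, le_rfl]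
    have hFs : ∑ x, F x = ∑ x ∈ A, f x := by simp [hF]
    have hcs : (∑ x ∈ A, f x) ^ 2 ≤ #A := by
      have h1 := sq_sum_le_card_mul_sum_sq (s := A) (f := f)
      have h2 : ∑ x ∈ A, f x ^ 2 ≤ 1 := by
        rw [← hf]; exact sum_le_sum_of_subset_of_nonneg (subset_univ _) (fun _ _ _ => sq_nonneg _)
      nlinarith [Nat.cast_nonneg (α := ℝ) #A]
    have hFg : ∀ g ∈ A - A, 78 / 100 ≤ ∑ w, F w * F (w + g) := by
      intro g hg
      have h1 := hcor g hg
      set G : ZMod p → ℝ := fun x => if x ∈ A then 0 else f x ^ 2 with hG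
      have hGs : ∑ x, G x = ∑ x ∈ Aᶜ, f x ^ 2 := by
        rw [← sum_filter_add_sum_filter_not univ (· ∈ A)]
        rw [sum_eq_zero (s := filter (· ∈ A) univ), zero_add]
        · apply sum_congr
          · ext x; simp
          · intro x hx; simp only [mem_compl] at hx; simp [hG, hx]
        · intro x hx; simp only [mem_filter, mem_univ, true_and] at hx; simp [hG, hx]
      have hGs2 : ∑ x, G (x + g) = ∑ x ∈ Aᶜ, f x ^ 2 := by
        rw [← hGs]; exact Equiv.sum_comp (Equiv.addRight g) G
      have hfs2 : ∑ x, f (x + g) ^ 2 = 1 := by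
        rw [← hf]; exact Equiv.sum_comp (Equiv.addRight g) (fun w => f w ^ 2)
      have h2 : ∑ w, f w * f (w + g) ≤ ∑ w, (F w * F (w + g) + (5 * G w + 1/20 * f (w + g) ^ 2)
          + (5 * G (w + g) + 1/20 * f w ^ 2)) := by
        apply sum_le_sum; intro w _
        have q1 := sq_nonneg (10 * f w - f (w + g))
        have q2 := sq_nonneg (10 * f (w + g) - f w)
        have q3 := sq_nonneg (f w)
        have q4 := sq_nonneg (f (w + g))
        simp only [hF, hG]
        split_ifs <;> nlinarith
      simp only [sum_add_distrib, ← mul_sum, hGs, hGs2, hfs2, hf] at h2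
      linarith
    have hcount : (#(A - A) : ℝ) * (78 / 100) ≤ #A := by
      refine le_trans ?_ hcs
      rw [← hFs, ← sum_trans F]
      calc (#(A - A) : ℝ) * (78 / 100) = ∑ _g ∈ A - A, (78/100 : ℝ) := by simp
        _ ≤ ∑ g ∈ A - A, ∑ w, F w * F (w + g) := sum_le_sum hFg
        _ ≤ _ := sum_le_sum_of_subset_of_nonneg (subset_univ _)
            (fun g _ _ => sum_nonneg fun w _ => mul_nonneg (hF0 _) (hF0 _))
    have hA1 : #A = 1 := by
      have hpos := hne.card_pos
      have h1 : 2 * #A ≤ #(A - A) + 1 := by omega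
      have h2 : (2 * #A : ℝ) ≤ #(A - A) + 1 := by exact_mod_cast h1
      have h3 : (#A : ℝ) < 2 := by linarith
      have h4 : #A < 2 := by exact_mod_cast h3
      omega
    obtain ⟨x0, hx0⟩ := card_eq_one.mp hA1
    refine ⟨x0, ?_⟩
    rw [hx0, sum_singleton] at hAm
    exact hAm

lemma Sc_le_one {p : ℕ} [Fact p.Prime] (f : ZMod p → ℝ) 
    (hf : ∑ x, f x ^ 2 = 1) (σ : ZMod p) : Sc f σ ≤ 1 := by
  have := Sc_eq f hf σ
  have h2 : 0 ≤ ∑ x, f x ^ 2 * ∑ z, (f z - f (-(x + σ) - z)) ^ 2 :=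
    sum_nonneg fun _ _ => mul_nonneg (sq_nonneg _) (sum_nonneg fun _ _ => sq_nonneg _)
  linarith

/-- averaged bound -/
lemma Sc_avg {p : ℕ} [Fact p.Prime] (k : ℕ) (hpk : Nat.gcd p (k + 3) = 1)
    (f : ZMod p → ℝ) (hf0 : ∀ x, 0 ≤ f x)
    (hf : ∑ x, f x ^ 2 = 1) (δ : ℝ) (hδ0 : 0 < δ) (hδ : δ < 1)
    (hj : ∃ j, δ / p < |f j ^ 2 - 1 / p|) (h0 : f 0 ^ 2 < 1 - δ / p) :
    ∑ a : Fin k → ZMod p, (∏ i, f (a i) ^ 2) * Sc f (∑ i, a i) ≤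
      1 - δ ^ 2 / 20000 * (99 / 100) ^ k / p := by
  have hp : (0:ℝ) < p := by exact_mod_cast (Fact.out : p.Prime).pos
  have hp2 : (2:ℝ) ≤ p := by exact_mod_cast (Fact.out : p.Prime).two_le
  have hw : ∑ a : Fin k → ZMod p, ∏ i, f (a i) ^ 2 = 1 := by
    rw [← Fintype.sum_pow (fun x => f x ^ 2) k, hf, one_pow]
  have hw0 : ∀ a : Fin k → ZMod p, 0 ≤ ∏ i, f (a i) ^ 2 :=
    fun a => prod_nonneg fun _ _ => sq_nonneg _
  have hr0 : (0:ℝ) < (99/100) ^ k := by positivity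
  have hr1 : ((99:ℝ)/100) ^ k ≤ 1 := pow_le_one₀ (by norm_num) (by norm_num)
  have hip : 1 / (p:ℝ) ≤ 1 / 2 := by
    apply one_div_le_one_div_of_le <;> linarith
  have hip0 : 0 < 1 / (p:ℝ) := by positivity
  have hδ2 : δ ^ 2 ≤ δ := by nlinarith
  have hδ2' : 0 < δ ^ 2 := by positivity
  have econ : δ ^ 2 / 20000 * (99 / 100) ^ k / p ≤ δ ^ 2 / 20000 * (1 / p) := by
    rw [div_eq_mul_one_div _ (p:ℝ)]
    apply mul_le_mul_of_nonneg_right _ hip0.le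
    nlinarith
  have unifb : ∀ c : ℝ, (∀ σ, Sc f σ ≤ c) →
      ∑ a : Fin k → ZMod p, (∏ i, f (a i) ^ 2) * Sc f (∑ i, a i) ≤ c := by
    intro c hc
    calc _ ≤ ∑ a : Fin k → ZMod p, (∏ i, f (a i) ^ 2) * c :=
          sum_le_sum fun a _ => mul_le_mul_of_nonneg_left (hc _) (hw0 a)
      _ = c := by rw [← sum_mul, hw, one_mul]
  by_cases hpt : ∃ x0, 99 / 100 ≤ f x0 ^ 2
  · obtain ⟨x0, hx0⟩ := hpt
    have hsmall : ∀ y, y ≠ x0 → f y ^ 2 ≤ 1 / 100 := by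
      intro y hy
      have : f x0 ^ 2 + f y ^ 2 ≤ 1 := by
        rw [← hf, ← sum_pair (f := fun x => f x ^ 2) hy.symm]
        exact sum_le_sum_of_subset_of_nonneg (subset_univ _) (fun _ _ _ => sq_nonneg _)
      linarith
    have hP := fun σ => Sc_point f hf0 hf σ x0 hx0
    by_cases hx : x0 = 0
    · apply unifb
      intro σ
      refine (hP σ).trans ?_
      have hd : δ / p = δ * (1 / p) := by ring
      have : δ * (1 / p) ≤ 1 - f (-σ - 2 * x0) ^ 2 := by
        by_cases hy : -σ - 2 * x0 = x0
        · rw [hy, hx, ← hd]; linarith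
        · have := hsmall _ hy
          nlinarith
      have : δ ^ 2 / 20000 * (1 / p) ≤ δ * (1 / p) / 8 := by nlinarith
      linarith
    · have hne : -(∑ _i : Fin k, x0) - 2 * x0 ≠ x0 := by
        intro h
        have h1 : ((k + 3 : ℕ) : ZMod p) * x0 = 0 := by
          simp only [sum_const, card_univ, Fintype.card_fin, nsmul_eq_mul] at h
          push_cast
          linear_combination -h
        rcases mul_eq_zero.mp h1 with h2 | h2
        · rw [ZMod.natCast_eq_zero_iff] at h2
          have h3 := Nat.dvd_gcd dvd_rfl h2
          rw [hpk] at h3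
          exact (Fact.out : p.Prime).one_lt.ne' (Nat.dvd_one.mp h3)
        · exact hx h2
      have h1 := hP (∑ _i : Fin k, x0)
      have h2 := hsmall _ hne
      have hsum : ∑ a : Fin k → ZMod p, (∏ i, f (a i) ^ 2) * (1 - Sc f (∑ i, a i)) ≥
          (99/100) ^ k * (1/20) := by
        have h3 := single_le_sum (f := fun a : Fin k → ZMod p =>
            (∏ i, f (a i) ^ 2) * (1 - Sc f (∑ i, a i)))
          (fun a _ => mul_nonneg (hw0 a) (by linarith [Sc_le_one f hf (∑ i, a i)]))
          (mem_univ (fun _ => x0))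
        refine le_trans ?_ h3
        simp only [prod_const, card_univ, Fintype.card_fin] at *
        apply mul_le_mul
        · exact pow_le_pow_left₀ (by norm_num) hx0 k
        · linarith
        · norm_num
        · positivity
      simp only [mul_sub, mul_one, sum_sub_distrib, hw] at hsum
      have : δ ^ 2 / 20000 * (99 / 100) ^ k / p ≤ (99/100) ^ k * (1/20) := by
        have e : δ ^ 2 / 20000 * (99 / 100) ^ k / p = (99/100) ^ k * (δ ^ 2 / 20000 * (1/p)) := by ring
        rw [e]
        apply mul_le_mul_of_nonneg_left _ hr0.le
        nlinarith
      linarith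
  · apply unifb
    intro σ
    by_cases hS : 1 - Sc f σ ≤ 1 / 20000
    · rcases dichotomy f hf0 hf σ hS with h | h
      · exact absurd h hpt
      · have h1 := Sc_unif f hf0 hf σ h
        obtain ⟨j, hj⟩ := hj
        have h2 := unif_dev f hf0 hf δ hδ0 hδ j hj
        have e : δ ^ 2 / 18 / p = δ ^ 2 / 18 * (1 / p) := by ring
        rw [e] at h2
        have := mul_pos hδ2' hip0
        nlinarith
    · push Not at hS
      nlinarith

/-- refined AM-GM for one tuple -/
lemma amgm {k : ℕ} (v : Fin (k + 3) → ℝ) (hv : ∀ i, 0 ≤ v i) :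
    ∏ r, v r ^ (((k:ℝ) + 2) / (k + 3)) ≤ (1 / ((k:ℝ) + 3)) *
      (2 * ((∏ i : Fin (k + 1), v i.succ.succ) * (Real.sqrt (v 0) * Real.sqrt (v 1))) +
        ∑ i : Fin (k + 1), ∏ s, v (i.succ.succ.succAbove s)) := by
  set P := ∏ i : Fin (k + 1), v i.succ.succ with hP
  set q := P * (Real.sqrt (v 0) * Real.sqrt (v 1)) with hq
  set X : Fin (k + 1) → ℝ := fun i => ∏ s, v (i.succ.succ.succAbove s) with hX
  have hP0 : 0 ≤ P := prod_nonneg fun _ _ => hv _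
  have hq0 : 0 ≤ q := by positivity
  have hX0 : ∀ i, 0 ≤ X i := fun i => prod_nonneg fun _ _ => hv _
  set Y : Fin (k + 3) → ℝ := Fin.cons q (Fin.cons q X) with hY
  have hY0 : ∀ i, 0 ≤ Y i := by
    intro i
    refine Fin.cases ?_ (fun i => Fin.cases ?_ (fun i => ?_) i) i
    · simpa [hY] using hq0
    · simpa [hY] using hq0
    · simpa [hY] using hX0 i
  have hk : (0:ℝ) < (k:ℝ) + 3 := by positivity
  have hag := Real.geom_mean_le_arith_mean_weighted univ (fun _ : Fin (k + 3) => 1 / ((k:ℝ) + 3)) Y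
    (fun _ _ => by positivity) (by simp; field_simp) (fun i _ => hY0 i)
  set T := ∏ r, v r with hT
  have hT0 : 0 ≤ T := prod_nonneg fun _ _ => hv _
  have hTP : T = v 0 * (v 1 * P) := by
    rw [hT, Fin.prod_univ_succ, Fin.prod_univ_succ]; rfl
  have hq2 : q * q = P * T := by
    have h0 := Real.mul_self_sqrt (hv 0)
    have h1 := Real.mul_self_sqrt (hv 1)
    calc q * q = P * P * (Real.sqrt (v 0) * Real.sqrt (v 0)) * (Real.sqrt (v 1) * Real.sqrt (v 1)) := by
          rw [hq]; ring
      _ = _ := by rw [h0, h1, hTP]; ring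
  have hXP : P * ∏ i, X i = T ^ (k + 1) := by
    rw [hP, ← prod_mul_distrib]
    have : ∀ i : Fin (k + 1), v i.succ.succ * X i = T := by
      intro i; rw [hT, Fin.prod_univ_succAbove v i.succ.succ]
    simp [this]
  have hYT : ∏ r, Y r = T ^ (k + 2) := by
    rw [Fin.prod_univ_succ, Fin.prod_univ_succ]
    simp only [hY, Fin.cons_zero, Fin.cons_succ]
    rw [← mul_assoc, hq2, mul_right_comm, hXP]; ring
  rw [Real.finsetProd_rpow _ _ (fun i _ => hY0 i), hYT, ← mul_sum] at hag
  rw [Real.finsetProd_rpow _ _ (fun i _ => hv i)]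
  have e : T ^ (((k:ℝ) + 2) / (k + 3)) = (T ^ (k + 2)) ^ (1 / ((k:ℝ) + 3)) := by
    rw [← Real.rpow_natCast T (k + 2), ← Real.rpow_mul hT0]
    congr 1; push_cast; ring
  rw [← hT, e]
  refine hag.trans (le_of_eq ?_)
  congr 1
  rw [Fin.sum_univ_succ, Fin.sum_univ_succ]
  simp only [hY, Fin.cons_zero, Fin.cons_succ]
  ring

lemma tuple_sum_cons {p k : ℕ} [Fact p.Prime] (G : (Fin (k + 1) → ZMod p) → ℝ) :
    ∑ a, G a = ∑ x, ∑ a', G (Fin.cons x a') := by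
  rw [← Fintype.sum_prod_type' (fun x a' => G (Fin.cons x a'))]
  exact (Equiv.sum_comp (Fin.consEquiv (fun _ => ZMod p)) G).symm

lemma sum_omit {p k : ℕ} [Fact p.Prime] (n : ZMod p → ℝ) (hn : ∑ x, n x = 1) (r : Fin (k + 1)) :
    ∑ a ∈ Finset.univ.filter (fun a : Fin (k + 1) → ZMod p => ∑ r, a r = 0),
      ∏ s, n (a (r.succAbove s)) = 1 := by
  rw [sum_filter, ← Equiv.sum_comp (Fin.insertNthEquiv (fun _ => ZMod p) r), Fintype.sum_prod_type,
    sum_comm]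
  have : ∀ (a' : Fin k → ZMod p) (x : ZMod p),
      (if ∑ i, (Fin.insertNthEquiv (fun _ => ZMod p) r) (x, a') i = 0 then
        ∏ s, n ((Fin.insertNthEquiv (fun _ => ZMod p) r) (x, a') (r.succAbove s)) else 0) =
      if x = -∑ i, a' i then ∏ s, n (a' s) else 0 := by
    intro a' x
    rw [Fin.sum_univ_succAbove _ r]
    simp [Fin.insertNthEquiv, eq_neg_iff_add_eq_zero]
  simp only [this, sum_ite_eq', mem_univ, if_true]
  rw [← Fintype.sum_pow n k, hn, one_pow]

lemma F_bound {p k : ℕ} [Fact p.Prime] (f : ZMod p → ℝ) (hf0 : ∀ x, 0 ≤ f x)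
    (hf : ∑ x, f x ^ 2 = 1) :
    ∑ a ∈ Finset.univ.filter (fun a : Fin (k + 3) → ZMod p => ∑ r, a r = 0),
      ∏ r, (f (a r) ^ 2) ^ (((k:ℝ) + 2) / (k + 3)) ≤
    1 - 2 / ((k:ℝ) + 3) * (1 - ∑ a : Fin k → ZMod p, (∏ i, f (a i) ^ 2) * Sc f (∑ i, a i)) := by
  have hk : (0:ℝ) < (k:ℝ) + 3 := by positivity
  have hmain : ∑ a ∈ Finset.univ.filter (fun a : Fin (k + 3) → ZMod p => ∑ r, a r = 0),
      ((∏ i : Fin (k + 1), f (a i.succ.succ) ^ 2) * (f (a 0) * f (a 1))) =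
      ∑ a : Fin k → ZMod p, (∏ i, f (a i) ^ 2) * Sc f (∑ i, a i) := by
    rw [sum_filter, tuple_sum_cons]
    have h1 : ∀ z : ZMod p, ∀ a : Fin (k + 2) → ZMod p, 
      (if ∑ r, (Fin.cons z a : Fin (k + 3) → ZMod p) r = 0 then
        (∏ i : Fin (k + 1), f ((Fin.cons z a : Fin (k + 3) → ZMod p) i.succ.succ) ^ 2) *
        (f ((Fin.cons z a : Fin (k + 3) → ZMod p) 0) * f ((Fin.cons z a : Fin (k + 3) → ZMod p) 1)) else 0) =
      if z + ∑ r, a r = 0 then (∏ i : Fin (k + 1), f (a i.succ) ^ 2) * (f z * f (a 0)) else 0 := by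
      intro z a
      have e1 : (Fin.cons z a : Fin (k + 3) → ZMod p) 1 = a 0 := rfl
      rw [Fin.sum_univ_succ, e1]
      simp only [Fin.cons_succ, Fin.cons_zero]
    simp only [h1]
    have h2 : ∀ z : ZMod p, 
        ∑ a : Fin (k + 2) → ZMod p, (if z + ∑ r, a r = 0 then
          (∏ i : Fin (k + 1), f (a i.succ) ^ 2) * (f z * f (a 0)) else 0) =
        ∑ a : Fin (k + 1) → ZMod p, (∏ i, f (a i) ^ 2) * (f z * f (-(∑ i, a i) - z)) := by
      intro z
      rw [tuple_sum_cons, sum_comm]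
      apply sum_congr rfl; intro a _
      have : ∀ y : ZMod p, (if z + ∑ r, (Fin.cons y a : Fin (k + 2) → ZMod p) r = 0 then
          (∏ i : Fin (k + 1), f ((Fin.cons y a : Fin (k + 2) → ZMod p) i.succ) ^ 2) *
            (f z * f ((Fin.cons y a : Fin (k + 2) → ZMod p) 0)) else 0) =
          if y = -(∑ i, a i) - z then (∏ i, f (a i) ^ 2) * (f z * f y) else 0 := by
        intro y
        rw [Fin.sum_univ_succ]
        simp only [Fin.cons_succ, Fin.cons_zero]
        have : z + (y + ∑ i, a i) = 0 ↔ y = -(∑ i, a i) - z := by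
          constructor
          · intro h; linear_combination h
          · intro h; rw [h]; ring
        simp only [this]
      simp only [this, sum_ite_eq', mem_univ, if_true]
    simp only [h2]
    rw [sum_comm]
    simp only [← mul_sum]
    rw [tuple_sum_cons, sum_comm]
    apply sum_congr rfl; intro a _
    rw [Sc, mul_sum]
    apply sum_congr rfl; intro x _
    rw [Fin.prod_univ_succ, Fin.sum_univ_succ]
    simp only [Fin.cons_succ, Fin.cons_zero]
    ring
  calc _ ≤ ∑ a ∈ Finset.univ.filter (fun a : Fin (k + 3) → ZMod p => ∑ r, a r = 0),
        (1 / ((k:ℝ) + 3)) *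
      (2 * ((∏ i : Fin (k + 1), f (a i.succ.succ) ^ 2) * (f (a 0) * f (a 1))) +
        ∑ i : Fin (k + 1), ∏ s, f (a (i.succ.succ.succAbove s)) ^ 2) := by
        apply sum_le_sum; intro a _
        have := amgm (fun r => f (a r) ^ 2) (fun _ => sq_nonneg _)
        simpa only [Real.sqrt_sq (hf0 _)] using this
    _ = (1 / ((k:ℝ) + 3)) * (2 * (∑ a : Fin k → ZMod p, (∏ i, f (a i) ^ 2) * Sc f (∑ i, a i))
          + (k + 1)) := by
        rw [← mul_sum, sum_add_distrib, ← mul_sum, hmain, sum_comm]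
        have : ∀ i : Fin (k + 1), ∑ a ∈ Finset.univ.filter (fun a : Fin (k + 3) → ZMod p => ∑ r, a r = 0),
          ∏ s, f (a (i.succ.succ.succAbove s)) ^ 2 = 1 := fun i =>
            sum_omit (fun x => f x ^ 2) hf i.succ.succ
        simp only [this]; simp
    _ = _ := by field_simp; ring
    _ ≤ _ := le_rfl

lemma sum_Phi {d p : ℕ} [Fact p.Prime] (a : Fin d → ZMod p) (t : ZMod p → ℝ) :
    ∑ k : ZMod p, t k * (Phi a k : ℝ) = ∑ r, t (a r) := by
  rw [← sum_fiberwise (s := univ) (g := a) (f := fun r => t (a r))]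
  apply sum_congr rfl; intro k _
  rw [sum_congr rfl (g := fun _ => t k) (fun r hr => by rw [(mem_filter.mp hr).2])]
  rw [sum_const, nsmul_eq_mul, mul_comm, Phi]

/-- Rate function bound (directed case): for `d ≥ 3` there is `δ₀ > 0` such that for all
`δ ∈ (0, δ₀)` there is `c(δ) > 0` with: for every prime `p` with `gcd(p,d) = 1` and every
probability vector `𝔫` on `{0,…,p-1}`, if `max_j |𝔫_j - 1/p| > δ/p` and `𝔫_0 < 1 - δ/p`,
then
`I(𝔫) = (d-1) ln p + (d-1) Σ_j 𝔫_j ln 𝔫_j + inf_t (ln(p^{-(d-1)} Σ_{a ∈ Z_{d,p}} e^{⟨t,Φ(a)⟩}) - d⟨t,𝔫⟩)`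
(the infimum taken in the extended reals) is at most `-c(δ)/p`.
(Here `Real.log 0 = 0` yields the convention `0 ln 0 = 0`.) -/
theorem directed_rate_function_bound (d : ℕ) (hd : 3 ≤ d) :
    ∃ δ₀ : ℝ, 0 < δ₀ ∧ ∀ δ : ℝ, 0 < δ → δ < δ₀ → ∃ c : ℝ, 0 < c ∧
      ∀ (p : ℕ) [Fact p.Prime], Nat.gcd p d = 1 →
        ∀ 𝔫 : ZMod p → ℝ, (∀ j, 0 ≤ 𝔫 j) → (∑ j, 𝔫 j) = 1 →
        (∃ j, δ / p < |𝔫 j - 1 / p|) → 𝔫 0 < 1 - δ / p →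
        ((((d : ℝ) - 1) * Real.log p
              + ((d : ℝ) - 1) * ∑ j, 𝔫 j * Real.log (𝔫 j) : ℝ) : EReal)
          + ⨅ t : ZMod p → ℝ,
              ((Real.log ((p : ℝ) ^ (-((d : ℤ) - 1)) *
                  ∑ a ∈ Finset.univ.filter (fun a : Fin d → ZMod p => ∑ r, a r = 0),
                    Real.exp (∑ k : ZMod p, t k * (Phi a k : ℝ)))
                - (d : ℝ) * ∑ k : ZMod p, t k * 𝔫 k : ℝ) : EReal)
          ≤ ((-c / p : ℝ) : EReal) := by
  obtain ⟨k, rfl⟩ : ∃ k, d = k + 3 := ⟨d - 3, by omega⟩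
  refine ⟨1, one_pos, fun δ hδ0 hδ1 => ?_⟩
  have hk3 : (0:ℝ) < (k:ℝ) + 3 := by positivity
  refine ⟨δ ^ 2 / 20000 * (99 / 100) ^ k / (k + 3), by positivity, ?_⟩
  intro p _ hpd n hn0 hn1 hj h0
  set c : ℝ := δ ^ 2 / 20000 * (99 / 100) ^ k / (k + 3) with hc
  have hc0 : 0 < c := by positivity
  have hp : (0:ℝ) < p := by exact_mod_cast (Fact.out : p.Prime).pos
  set f : ZMod p → ℝ := fun x => Real.sqrt (n x) with hf
  have hfn : ∀ x, f x ^ 2 = n x := fun x => Real.sq_sqrt (hn0 x)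
  have hf0 : ∀ x, 0 ≤ f x := fun x => Real.sqrt_nonneg _
  have hf1 : ∑ x, f x ^ 2 = 1 := by simp only [hfn, hn1]
  set α : ℝ := ((k:ℝ) + 2) / (k + 3) with hα
  have hα0 : 0 < α := by positivity
  have hB := F_bound (k := k) f hf0 hf1
  have hA := Sc_avg k hpd f hf0 hf1 δ hδ0 hδ1 (by simpa only [hfn] using hj)
    (by rw [hfn]; exact h0)
  set W := ∑ a : Fin k → ZMod p, (∏ i, f (a i) ^ 2) * Sc f (∑ i, a i) with hW
  simp only [hfn, ← hα] at hB
  set q : ℝ → ZMod p → ℝ := fun ε x => if n x = 0 then ε else n x ^ α with hq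
  set F : ℝ → ℝ := fun ε =>
    ∑ a ∈ Finset.univ.filter (fun a : Fin (k + 3) → ZMod p => ∑ r, a r = 0), ∏ r, q ε (a r) with hF
  have hF0 : F 0 = ∑ a ∈ Finset.univ.filter (fun a : Fin (k + 3) → ZMod p => ∑ r, a r = 0),
      ∏ r, n (a r) ^ α := by
    simp only [hF, hq]
    refine sum_congr rfl fun a _ => prod_congr rfl fun r _ => ?_
    split_ifs with h
    · rw [h, Real.zero_rpow hα0.ne']
    · rfl
  have hcont : Continuous F := by
    simp only [hF]
    refine continuous_finset_sum _ fun a _ => continuous_finset_prod _ fun r _ => ?_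
    simp only [hq]
    split_ifs
    · exact continuous_id
    · exact continuous_const
  have hlt : F 0 < Real.exp (-c / p) := by
    have h1 : F 0 ≤ 1 - 2 * (c / p) := by
      rw [hF0]
      refine hB.trans ?_
      have h2 : δ ^ 2 / 20000 * (99 / 100) ^ k / p ≤ 1 - W := by linarith
      have h3 := mul_le_mul_of_nonneg_left h2 (by positivity : 0 ≤ 2 / ((k:ℝ) + 3))
      have h4 : 2 / ((k:ℝ) + 3) * (δ ^ 2 / 20000 * (99 / 100) ^ k / p) = 2 * (c / p) := by
        rw [hc]; ring
      linarith
    have h2 := Real.add_one_le_exp (-c / p)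
    have h3 : 0 < c / p := by positivity
    have h4 : -c / p = -(c / p) := by ring
    rw [h4] at h2 ⊢
    linarith
  obtain ⟨ε, hε, hε0⟩ : ∃ ε, F ε < Real.exp (-c / p) ∧ 0 < ε := by
    have h1 : ∀ᶠ ε in nhdsWithin (0:ℝ) (Set.Ioi 0), F ε < Real.exp (-c / p) :=
      (hcont.continuousAt.eventually (gt_mem_nhds hlt)).filter_mono nhdsWithin_le_nhds
    obtain ⟨ε, h⟩ := (h1.and self_mem_nhdsWithin).exists
    exact ⟨ε, h.1, h.2⟩
  have hqpos : ∀ x, 0 < q ε x := by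
    intro x; simp only [hq]; split_ifs with h
    · exact hε0
    · exact Real.rpow_pos_of_pos (lt_of_le_of_ne (hn0 x) (Ne.symm h)) _
  have hFpos : 0 < F ε := by
    simp only [hF]
    refine sum_pos (fun a _ => prod_pos fun r _ => hqpos _) ⟨fun _ => 0, ?_⟩
    simp
  refine (add_le_add le_rfl (iInf_le _ (fun x => Real.log (q ε x)))).trans ?_
  rw [← EReal.coe_add, EReal.coe_le_coe_iff]
  have hexp : ∀ a : Fin (k + 3) → ZMod p,
      Real.exp (∑ j : ZMod p, Real.log (q ε j) * (Phi a j : ℝ)) = ∏ r, q ε (a r) := by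
    intro a
    rw [sum_Phi a (fun x => Real.log (q ε x)), Real.exp_sum]
    exact prod_congr rfl fun r _ => Real.exp_log (hqpos _)
  simp only [hexp]
  have hlin : ∑ j, Real.log (q ε j) * n j = α * ∑ j, n j * Real.log (n j) := by
    rw [mul_sum]
    refine sum_congr rfl fun j _ => ?_
    simp only [hq]
    split_ifs with h
    · simp [h]
    · rw [Real.log_rpow (lt_of_le_of_ne (hn0 j) (Ne.symm h))]; ring
  have hFd : ∑ a ∈ Finset.univ.filter (fun a : Fin (k + 3) → ZMod p => ∑ r, a r = 0),
      ∏ r, q ε (a r) = F ε := rfl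
  rw [hlin, hFd, Real.log_mul (zpow_pos hp _).ne' hFpos.ne', Real.log_zpow]
  have hlogF : Real.log (F ε) ≤ -c / p := by
    rw [← Real.log_exp (-c / p)]
    exact Real.log_le_log hFpos hε.le
  have hαd : ((k + 3 : ℕ) : ℝ) * α = ((k + 3 : ℕ) : ℝ) - 1 := by
    rw [hα]; push_cast; field_simp; ring
  rw [← mul_assoc, hαd]
  push_cast
  linarith
end

section
/- Let d ≥ 3 be a fixed integer. There exists δ₀ > 0 such that for every δ ∈ (0, δ₀) there exists a constant c(δ) > 0 with the following property: for every prime p with gcd(p,d) = 1 and every vector 𝔫 = (𝔫_0,…,𝔫_{p−1}) ∈ ℝ^p with 𝔫_j ≥ 0 and Σ_j 𝔫_j = 1, if max_{0≤j≤p−1} |𝔫_j − 1/p| > δ/p and 𝔫_0 < 1 − δ/p, then Σ_{(a_1,…,a_d) ∈ Z_{d,p}} ∏_{r=1}^{d} 𝔫_{a_r}^{(d−1)/d} ≤ 1 − c(δ)/p. -/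
open Finset

lemma psb_amgm (m : ℕ) (x : Fin (m+2) → ℝ) (hx : ∀ i, 0 ≤ x i) :
    ∏ i, (x i) ^ (1 / ((m:ℝ)+2)) ≤ (∑ i, x i - (√(x 0) - √(x 1))^2) / ((m:ℝ)+2) := by
  have hm : (0:ℝ) < (m:ℝ)+2 := by positivity
  set q : ℝ := √(x 0) * √(x 1) with hq
  have hq0 : 0 ≤ q := by positivity
  let z : Fin (m+2) → ℝ := Fin.cons q (Fin.cons q (fun i : Fin m => x i.succ.succ))
  have hz : ∀ i, 0 ≤ z i := by
    intro i
    refine Fin.cases ?_ (fun j => ?_) i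
    · exact hq0
    · refine Fin.cases ?_ (fun l => ?_) j
      · exact hq0
      · exact hx _
  have h := Real.geom_mean_le_arith_mean_weighted univ (fun _ => 1 / ((m:ℝ)+2)) z
    (fun _ _ => by positivity) (by simp; field_simp) (fun i _ => hz i)
  rw [← Finset.mul_sum] at h
  have e1 : ∏ i, (z i) ^ (1 / ((m:ℝ)+2)) = ∏ i, (x i) ^ (1 / ((m:ℝ)+2)) := by
    rw [Fin.prod_univ_succ, Fin.prod_univ_succ, Fin.prod_univ_succ, Fin.prod_univ_succ,
      ← mul_assoc, ← mul_assoc]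
    congr 1
    change q ^ _ * q ^ _ = _
    rw [← Real.mul_rpow hq0 hq0, ← Real.mul_rpow (hx _) (hx _)]
    congr 1
    rw [hq]
    calc _ = (√(x 0) * √(x 0)) * (√(x 1) * √(x 1)) := by ring
      _ = _ := by rw [Real.mul_self_sqrt (hx _), Real.mul_self_sqrt (hx _)]; rfl
  have e2 : ∑ i, z i = ∑ i, x i - (√(x 0) - √(x 1))^2 := by
    rw [Fin.sum_univ_succ, Fin.sum_univ_succ, Fin.sum_univ_succ, Fin.sum_univ_succ]
    change q + (q + ∑ i : Fin m, x i.succ.succ) = x 0 + (x 1 + ∑ i : Fin m, x i.succ.succ) - _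
    rw [sub_sq, Real.sq_sqrt (hx _), Real.sq_sqrt (hx _)]
    ring
  rw [e1, e2] at h
  rwa [one_div_mul_eq_div] at h

lemma psb_prod (m : ℕ) (v : Fin (m+2) → ℝ) (hv : ∀ i, 0 ≤ v i) :
    ∏ r, (v r) ^ (((m:ℝ)+1) / ((m:ℝ)+2)) =
      ∏ s : Fin (m+2), (∏ i : Fin (m+1), v (s.succAbove i)) ^ (1 / ((m:ℝ)+2)) := by
  have h1 : ∀ s : Fin (m+2), (∏ i : Fin (m+1), v (s.succAbove i)) ^ (1 / ((m:ℝ)+2))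
      = ∏ r ∈ univ.erase s, (v r) ^ (1 / ((m:ℝ)+2)) := by
    intro s
    rw [← Real.finsetProd_rpow _ _ (fun i _ => hv _)]
    have : univ.erase s = univ.image s.succAbove := by
      rw [Fin.image_succAbove_univ]; ext; simp
    rw [this, Finset.prod_image (fun a _ b _ h => Fin.succAbove_right_injective h)]
  simp_rw [h1]
  rw [Finset.prod_comm' (t' := univ) (s' := fun r => univ.erase r)
    (by intro x y; simp; exact ne_comm)]
  refine Finset.prod_congr rfl fun r _ => ?_
  rw [Finset.prod_const, Finset.card_erase_of_mem (mem_univ _), Finset.card_univ, Fintype.card_fin,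
    ← Real.rpow_natCast, ← Real.rpow_mul (hv _)]
  congr 1
  push_cast
  simp
  field_simp

lemma psb_sumZ {p : ℕ} [NeZero p] (m : ℕ) (s : Fin (m+1)) (F : (Fin (m+1) → ZMod p) → ℝ) :
    ∑ a ∈ univ.filter (fun a : Fin (m+1) → ZMod p => ∑ r, a r = 0), F a =
      ∑ b : Fin m → ZMod p, F (s.insertNth (-∑ i, b i) b) := by
  symm
  refine Finset.sum_bij (fun b _ => s.insertNth (-∑ i, b i) b) ?_ ?_ ?_ (fun _ _ => rfl)
  · intro b _
    simp [Fin.sum_univ_succAbove _ s]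
  · intro b _ b' _ h
    ext i
    have := congrFun h (s.succAbove i)
    simpa using this
  · intro a ha
    refine ⟨fun i => a (s.succAbove i), mem_univ _, ?_⟩
    have ha : ∑ r, a r = 0 := by simpa using ha
    rw [Fin.sum_univ_succAbove _ s] at ha
    rw [← eq_neg_of_add_eq_zero_left ha]
    exact Fin.insertNth_self_removeNth s a

lemma psb_gap {p : ℕ} [NeZero p] (m : ℕ) (n : ZMod p → ℝ) (hn : ∀ j, 0 ≤ n j)
    (h1 : ∑ j, n j = 1) :
    ∑ a ∈ univ.filter (fun a : Fin (m+2) → ZMod p => ∑ r, a r = 0),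
      ∏ r, (n (a r)) ^ (((m:ℝ)+1) / ((m:ℝ)+2)) ≤
    1 - (∑ c : Fin m → ZMod p, (∏ i, n (c i)) *
      ∑ a, (√(n a) - √(n (-(∑ i, c i) - a)))^2) / ((m:ℝ)+2) := by
  have hm : (0:ℝ) < (m:ℝ)+2 := by positivity
  have step : ∀ a : Fin (m+2) → ZMod p, ∏ r, (n (a r)) ^ (((m:ℝ)+1) / ((m:ℝ)+2)) ≤
      (∑ s : Fin (m+2), ∏ i : Fin (m+1), n (a (s.succAbove i)) -
        (∏ i : Fin m, n (a i.succ.succ)) * (√(n (a 1)) - √(n (a 0)))^2) / ((m:ℝ)+2) := by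
    intro a
    rw [psb_prod m (fun r => n (a r)) (fun r => hn _)]
    refine (psb_amgm m _ (fun s => Finset.prod_nonneg fun i _ => hn _)).trans (le_of_eq ?_)
    congr 2
    have hP : 0 ≤ ∏ i : Fin m, n (a i.succ.succ) := Finset.prod_nonneg fun i _ => hn _
    have x0 : ∏ i : Fin (m+1), n (a ((0 : Fin (m+2)).succAbove i)) =
        n (a 1) * ∏ i : Fin m, n (a i.succ.succ) := by
      rw [Fin.prod_univ_succ]; rfl
    have x1 : ∏ i : Fin (m+1), n (a ((1 : Fin (m+2)).succAbove i)) =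
        n (a 0) * ∏ i : Fin m, n (a i.succ.succ) := by
      rw [Fin.prod_univ_succ]
      congr 1
    rw [x0, x1, Real.sqrt_mul (hn _), Real.sqrt_mul (hn _), ← sub_mul, mul_pow, Real.sq_sqrt hP,
      mul_comm]
  refine (Finset.sum_le_sum fun a _ => step a).trans (le_of_eq ?_)
  rw [← Finset.sum_div, Finset.sum_sub_distrib, Finset.sum_comm]
  have e1 : ∀ s : Fin (m+2), ∑ a ∈ univ.filter (fun a : Fin (m+2) → ZMod p => ∑ r, a r = 0),
      ∏ i : Fin (m+1), n (a (s.succAbove i)) = 1 := by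
    intro s
    rw [psb_sumZ (m+1) s]
    simp only [Fin.insertNth_apply_succAbove]
    rw [← Fintype.sum_pow, h1, one_pow]
  have e2 : ∑ a ∈ univ.filter (fun a : Fin (m+2) → ZMod p => ∑ r, a r = 0),
      (∏ i : Fin m, n (a i.succ.succ)) * (√(n (a 1)) - √(n (a 0)))^2 =
      ∑ c : Fin m → ZMod p, (∏ i, n (c i)) *
      ∑ a, (√(n a) - √(n (-(∑ i, c i) - a)))^2 := by
    rw [psb_sumZ (m+1) 0, ← (Fin.consEquiv (fun _ : Fin (m+1) => ZMod p)).sum_comp,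
      Fintype.sum_prod_type_right]
    refine Finset.sum_congr rfl fun c _ => ?_
    rw [Finset.mul_sum]
    refine Finset.sum_congr rfl fun y _ => ?_
    have : -(∑ i, c i) - y = - ∑ i, (Fin.cons y c : Fin (m+1) → ZMod p) i := by
      rw [Fin.sum_univ_succ]; simp; ring
    rw [this]
    simp [Fin.consEquiv]
  rw [e2, Finset.sum_congr rfl (fun s _ => e1 s)]
  simp
  field_simp

lemma psb_shR {p : ℕ} [NeZero p] (f : ZMod p → ℝ) (s : ZMod p) : ∑ a, f (a + s) = ∑ a, f a :=
  Equiv.sum_comp (Equiv.addRight s) f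

lemma psb_shL {p : ℕ} [NeZero p] (f : ZMod p → ℝ) (s : ZMod p) : ∑ a, f (s + a) = ∑ a, f a :=
  Equiv.sum_comp (Equiv.addLeft s) f

lemma psb_subL {p : ℕ} [NeZero p] (f : ZMod p → ℝ) (s : ZMod p) : ∑ a, f (s - a) = ∑ a, f a :=
  Equiv.sum_comp (Equiv.subLeft s) f

lemma psb_subR {p : ℕ} [NeZero p] (f : ZMod p → ℝ) (s : ZMod p) : ∑ a, f (a - s) = ∑ a, f a :=
  Equiv.sum_comp (Equiv.subRight s) f

/-- Squared distance between a function and its translate. -/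
noncomputable def psbPhi {p : ℕ} [NeZero p] (g : ZMod p → ℝ) (t : ZMod p) : ℝ :=
  ∑ a, (g a - g (a + t))^2

section
variable {p : ℕ} [NeZero p] (g : ZMod p → ℝ)

lemma psbPhi_nonneg (t : ZMod p) : 0 ≤ psbPhi g t := Finset.sum_nonneg fun _ _ => sq_nonneg _

lemma psbPhi_add (s t : ZMod p) : psbPhi g (s + t) ≤ 2 * psbPhi g s + 2 * psbPhi g t := by
  have : psbPhi g t = ∑ a, (g (a + s) - g (a + s + t))^2 :=
    (psb_shR (fun a => (g a - g (a + t))^2) s).symm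
  rw [this]
  unfold psbPhi
  rw [Finset.mul_sum, Finset.mul_sum, ← Finset.sum_add_distrib]
  refine Finset.sum_le_sum fun a _ => ?_
  rw [← add_assoc]
  nlinarith [sq_nonneg ((g a - g (a+s)) - (g (a + s) - g (a + s + t)))]

lemma psb_K (b b' : ZMod p) : psbPhi g (b - b') ≤
    2 * ∑ a, (g a - g (-b - a))^2 + 2 * ∑ a, (g a - g (-b' - a))^2 := by
  have : psbPhi g (b - b') = ∑ a, (g (-b - a) - g (-b' - a))^2 := by
    unfold psbPhi
    rw [← (Equiv.subLeft (-b)).sum_comp]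
    refine Finset.sum_congr rfl fun a _ => ?_
    simp only [Equiv.subLeft_apply]
    congr 3
    ring
  rw [this, Finset.mul_sum, Finset.mul_sum, ← Finset.sum_add_distrib]
  refine Finset.sum_le_sum fun a _ => ?_
  nlinarith [sq_nonneg ((g a - g (-b-a)) + (g a - g (-b' - a)))]

lemma psb_L1 (h1 : ∑ a, g a ^ 2 = 1) (t : ZMod p) :
    (∑ a, |g a ^ 2 - g (a + t) ^ 2|)^2 ≤ 4 * psbPhi g t := by
  have h2 : ∑ a, g (a + t) ^ 2 = 1 := by
    rw [← h1]; exact psb_shR (fun a => g a ^ 2) t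
  have e : ∑ a, |g a ^ 2 - g (a + t) ^ 2| = ∑ a, |g a - g (a+t)| * |g a + g (a+t)| := by
    refine Finset.sum_congr rfl fun a _ => ?_
    rw [← abs_mul]; congr 1; ring
  rw [e]
  refine (Finset.sum_mul_sq_le_sq_mul_sq _ _ _).trans ?_
  simp only [sq_abs]
  rw [mul_comm]
  refine mul_le_mul_of_nonneg_right ?_ (psbPhi_nonneg g t)
  calc ∑ a, (g a + g (a+t))^2 ≤ ∑ a, (2 * g a ^2 + 2 * g (a+t)^2) :=
        Finset.sum_le_sum fun a _ => by nlinarith [sq_nonneg (g a - g (a+t))]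
    _ = 4 := by rw [Finset.sum_add_distrib, ← Finset.mul_sum, ← Finset.mul_sum, h1, h2]; norm_num

lemma psb_L1' (h1 : ∑ a, g a ^ 2 = 1) (t : ZMod p) (ht : psbPhi g t ≤ 16 / 4096) :
    ∑ a, |g a ^ 2 - g (a + t) ^ 2| ≤ 1 / 8 := by
  refine abs_le_of_sq_le_sq' ?_ (by norm_num) |>.2
  have := psb_L1 g h1 t
  linarith

/-- averaged translate distance -/
noncomputable def psbD (g : ZMod p → ℝ) : ℝ := ∑ x, g x ^ 2 * ∑ b, g b ^ 2 * psbPhi g (b - x)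

lemma psb_unif (h1 : ∑ a, g a ^ 2 = 1) (h : ∀ t, psbPhi g t ≤ 16 / 4096) :
    (∑ t, psbPhi g t) / p / 2 ≤ psbD g := by
  have hp : (0:ℝ) < p := by exact_mod_cast Nat.pos_of_ne_zero (NeZero.ne p)
  set M := (∑ t, psbPhi g t) / p with hM
  have hMp : ∑ t, psbPhi g t = p * M := by rw [hM]; field_simp
  have hmax : ∀ t, psbPhi g t ≤ 4 * M := by
    intro t
    have h3 : ∑ s : ZMod p, psbPhi g t ≤ ∑ s, (2 * psbPhi g s + 2 * psbPhi g (t - s)) :=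
      Finset.sum_le_sum fun s _ => by simpa using psbPhi_add g s (t - s)
    rw [Finset.sum_add_distrib, ← Finset.mul_sum, ← Finset.mul_sum,
      psb_subL (fun s => psbPhi g s) t, hMp] at h3
    simp [ZMod.card] at h3
    have : (p:ℝ) * psbPhi g t ≤ p * (4 * M) := by linarith
    exact le_of_mul_le_mul_left this hp
  have key : ∀ x, M / 2 ≤ ∑ b, g b ^ 2 * psbPhi g (b - x) := by
    intro x
    have hs : ∀ s : ZMod p, ∑ b, g (b + s) ^ 2 * psbPhi g (b - x) - M / 2
        ≤ ∑ b, g b ^ 2 * psbPhi g (b - x) := by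
      intro s
      have hM0 : 0 ≤ M := by
        have := (psbPhi_nonneg g 0).trans (hmax 0); linarith
      have : ∑ b, g (b + s) ^ 2 * psbPhi g (b - x) - ∑ b, g b ^ 2 * psbPhi g (b - x) ≤
          ∑ b, |g b ^ 2 - g (b + s) ^ 2| * (4 * M) := by
        rw [← Finset.sum_sub_distrib]
        refine Finset.sum_le_sum fun b _ => ?_
        have h5 := neg_abs_le (g b ^ 2 - g (b + s) ^ 2)
        rw [← sub_mul]
        calc _ ≤ |g b ^ 2 - g (b + s) ^ 2| * psbPhi g (b - x) :=
              mul_le_mul_of_nonneg_right (by linarith) (psbPhi_nonneg _ _)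
          _ ≤ _ := mul_le_mul_of_nonneg_left (hmax _) (abs_nonneg _)
      rw [← Finset.sum_mul] at this
      have h6 := mul_le_mul_of_nonneg_right (psb_L1' g h1 s (h s)) (by linarith : 0 ≤ 4 * M)
      linarith
    have h7 := Finset.sum_le_sum fun s (_ : s ∈ (univ : Finset (ZMod p))) => hs s
    rw [Finset.sum_sub_distrib, Finset.sum_comm] at h7
    have h8 : ∀ b : ZMod p, ∑ s, g (b + s) ^ 2 * psbPhi g (b - x) = psbPhi g (b - x) := by
      intro b
      rw [← Finset.sum_mul, psb_shL (fun s => g s ^ 2) b, h1, one_mul]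
    rw [Finset.sum_congr rfl fun b _ => h8 b,
      psb_subR (fun s => psbPhi g s) x, hMp] at h7
    simp [ZMod.card] at h7
    have : (p:ℝ) * (M / 2) ≤ p * ∑ b, g b ^ 2 * psbPhi g (b - x) := by linarith
    exact le_of_mul_le_mul_left this hp
  calc M / 2 = ∑ x, g x ^ 2 * (M / 2) := by rw [← Finset.sum_mul, h1, one_mul]
    _ ≤ _ := Finset.sum_le_sum fun x _ => mul_le_mul_of_nonneg_left (key x) (sq_nonneg _)

lemma psb_M (hg : ∀ a, 0 ≤ g a) (h1 : ∑ a, g a ^ 2 = 1) (j : ZMod p) (δ : ℝ) (hδ : 0 < δ)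
    (hδ1 : δ < 1) (hj : δ / p < |g j ^ 2 - 1 / p|) :
    δ^2 / (9 * p) ≤ (∑ t, psbPhi g t) / p := by
  have hp : (0:ℝ) < p := by exact_mod_cast Nat.pos_of_ne_zero (NeZero.ne p)
  have hle : ∑ t, (g j - g (j + t))^2 ≤ ∑ t, psbPhi g t :=
    Finset.sum_le_sum fun t _ =>
      Finset.single_le_sum (f := fun a => (g a - g (a+t))^2) (fun _ _ => sq_nonneg _) (mem_univ j)
  rw [psb_shL (fun b => (g j - g b)^2) j] at hle
  have hS : (∑ b, g b)^2 ≤ p := by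
    have := sq_sum_le_card_mul_sum_sq (s := univ) (f := g)
    rw [h1] at this
    simpa [ZMod.card] using this
  have hS' : ∑ b, g b ≤ √p := Real.le_sqrt_of_sq_le hS
  have e : ∑ b, (g j - g b)^2 = p * g j ^2 - 2 * g j * ∑ b, g b + 1 := by
    simp only [sub_sq]
    rw [Finset.sum_add_distrib, Finset.sum_sub_distrib, ← Finset.mul_sum, h1]
    simp [ZMod.card]
  have hsq : √(p:ℝ)^2 = p := Real.sq_sqrt hp.le
  set y := √p * g j with hy
  have hy0 : 0 ≤ y := mul_nonneg (Real.sqrt_nonneg _) (hg _)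
  have hlow : (y - 1)^2 ≤ ∑ b, (g j - g b)^2 := by
    rw [e]
    have := mul_le_mul_of_nonneg_left hS' (hg j)
    have : y^2 = p * g j ^2 := by rw [hy, mul_pow, hsq]
    nlinarith
  have hyd : δ < |y^2 - 1| := by
    have : y^2 - 1 = p * (g j ^ 2 - 1/p) := by
      rw [hy, mul_pow, hsq]; field_simp
    rw [this, abs_mul, abs_of_pos hp]
    rw [div_lt_iff₀ hp] at hj
    linarith
  have hfin : δ^2 / 9 ≤ (y-1)^2 := by
    rcases le_or_gt 2 y with h | h
    · nlinarith
    · have : |y^2 - 1| = |y - 1| * (y + 1) := by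
        rw [show y^2 - 1 = (y-1)*(y+1) by ring, abs_mul,
          abs_of_nonneg (by linarith : 0 ≤ y + 1)]
      rw [this] at hyd
      have h3 : δ ≤ 3 * |y - 1| := by nlinarith [abs_nonneg (y-1)]
      rw [← sq_abs (y-1)]
      nlinarith [abs_nonneg (y-1)]
  rw [div_mul_eq_div_div]
  gcongr
  linarith

end

lemma psb_dich {p : ℕ} [Fact p.Prime] (g : ZMod p → ℝ) (h1 : ∑ a, g a ^ 2 = 1)
    (hD : psbD g < 1 / 40960) :
    (∃ x, 1 - g x ^ 2 ≤ 4096 * psbD g) ∨ (∀ t, psbPhi g t ≤ 16 / 4096) := by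
  classical
  have hpr : p.Prime := Fact.out
  set A : Finset (ZMod p) := univ.filter (fun t => psbPhi g t ≤ 1 / 4096) with hA
  have hA0 : (0 : ZMod p) ∈ A := by simp [hA, psbPhi]
  obtain ⟨x, hx⟩ : ∃ x, ∑ b, g b ^ 2 * psbPhi g (b - x) ≤ psbD g := by
    by_contra! hcon
    have hne : ∃ x, 0 < g x ^ 2 := by
      by_contra! hc
      have := Finset.sum_nonpos (s := univ) (fun x _ => hc x)
      linarith
    obtain ⟨x, hx⟩ := hne
    have : ∑ x, g x ^ 2 * psbD g < psbD g := by
      conv_rhs => rw [psbD]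
      exact Finset.sum_lt_sum (fun i _ => mul_le_mul_of_nonneg_left (hcon i).le (sq_nonneg _))
        ⟨x, mem_univ _, mul_lt_mul_of_pos_left (hcon x) hx⟩
    rw [← Finset.sum_mul, h1, one_mul] at this
    exact lt_irrefl _ this
  set B : Finset (ZMod p) := univ.filter (fun b => b - x ∈ A) with hB
  have hBc : 1 - ∑ b ∈ B, g b ^ 2 ≤ 4096 * psbD g := by
    have h2 : ∑ b ∈ B, g b ^ 2 + ∑ b ∈ Bᶜ, g b ^ 2 = 1 := by
      rw [Finset.sum_add_sum_compl, h1]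
    have h3 : ∑ b ∈ Bᶜ, g b ^ 2 * (1/4096) ≤ ∑ b, g b ^ 2 * psbPhi g (b - x) := by
      refine (Finset.sum_le_sum (g := fun b => g b ^ 2 * psbPhi g (b - x)) fun b hb => ?_).trans
        (Finset.sum_le_sum_of_subset_of_nonneg (subset_univ _)
          fun b _ _ => mul_nonneg (sq_nonneg _) (psbPhi_nonneg _ _))
      have : 1 / 4096 < psbPhi g (b - x) := by simpa [hB, hA] using hb
      exact mul_le_mul_of_nonneg_left this.le (sq_nonneg _)
    rw [← Finset.sum_mul] at h3
    linarith
  have hBcard : B.card = A.card := by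
    refine Finset.card_bij (fun b _ => b - x) (fun b hb => by simpa [hB] using hb)
      (fun b _ b' _ h => by simpa using h) (fun t ht => ⟨t + x, by simpa [hB] using ht, by simp⟩)
  by_cases hc : A.card ≤ 1
  · left
    refine ⟨x, ?_⟩
    have hBx : B = {x} := by
      have hxB : x ∈ B := by simp [hB, hA0]
      exact (Finset.eq_singleton_iff_unique_mem.2 ⟨hxB, fun y hy =>
        Finset.card_le_one.1 (hBcard.trans_le hc) y hy x hxB⟩)
    rw [hBx] at hBc
    simpa using hBc
  · right
    push Not at hc
    open Pointwise in
    obtain ⟨C, hC1, hC2⟩ : ∃ C : Finset (ZMod p), (∀ t ∈ C, psbPhi g t ≤ 16 / 4096) ∧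
        min p (4 * A.card - 3) ≤ C.card := by
      have hAn : A.Nonempty := ⟨0, hA0⟩
      refine ⟨(A + A) + (A + A), ?_, ?_⟩
      · have hAA : ∀ t ∈ A + A, psbPhi g t ≤ 4 / 4096 := by
          intro t ht
          obtain ⟨u, hu, v, hv, rfl⟩ := Finset.mem_add.1 ht
          have := psbPhi_add g u v
          have hu' : psbPhi g u ≤ 1 / 4096 := by simpa [hA] using hu
          have hv' : psbPhi g v ≤ 1 / 4096 := by simpa [hA] using hv
          linarith
        intro t ht
        obtain ⟨u, hu, v, hv, rfl⟩ := Finset.mem_add.1 ht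
        have := psbPhi_add g u v
        have := hAA u hu
        have := hAA v hv
        linarith
      · have c1 := ZMod.cauchy_davenport hpr hAn hAn
        have c2 := ZMod.cauchy_davenport hpr (hAn.add hAn) (hAn.add hAn)
        omega
    have hCu : C = univ := by
      by_contra hne
      have hlt : C.card < p := by
        have := (Finset.card_lt_iff_ne_univ C).2 hne
        simpa [ZMod.card] using this
      have hge : 2 * A.card ≤ C.card := by omega
      have hlow : ∀ t ∈ C, (7/10 : ℝ) ≤ ∑ b ∈ B, g (b + t) ^ 2 := by
        intro t ht
        have h5 := psb_L1' g h1 t (hC1 t ht)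
        have h6 : ∑ b ∈ B, g b ^ 2 - ∑ b ∈ B, g (b + t) ^ 2 ≤ ∑ b, |g b ^ 2 - g (b + t) ^ 2| := by
          rw [← Finset.sum_sub_distrib]
          exact (Finset.sum_le_sum fun b _ => le_abs_self _).trans
            (Finset.sum_le_sum_of_subset_of_nonneg (subset_univ _) fun _ _ _ => abs_nonneg _)
        linarith
      have h7 := Finset.sum_le_sum hlow
      rw [Finset.sum_comm] at h7
      have h8 : ∀ b ∈ B, ∑ t ∈ C, g (b + t) ^ 2 ≤ 1 := by
        intro b _
        refine (Finset.sum_le_sum_of_subset_of_nonneg (subset_univ _)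
          fun _ _ _ => sq_nonneg _).trans (le_of_eq ?_)
        rw [psb_shL (fun s => g s ^ 2) b, h1]
      have h9 := h7.trans (Finset.sum_le_sum h8)
      simp only [Finset.sum_const, nsmul_eq_mul, mul_one, hBcard] at h9
      have h10 : (2:ℝ) * A.card ≤ C.card := by exact_mod_cast hge
      have h11 : (1:ℝ) < A.card := by exact_mod_cast hc
      linarith
    intro t
    exact hC1 t (hCu ▸ mem_univ t)

lemma psb_DE {p : ℕ} [NeZero p] (g : ZMod p → ℝ) (h1 : ∑ a, g a ^ 2 = 1) (k : ℕ) :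
    psbD g ≤ 4 * ∑ c : Fin (k+1) → ZMod p, (∏ i, g (c i) ^ 2) *
      ∑ a, (g a - g (-(∑ i, c i) - a))^2 := by
  have e : ∑ c : Fin (k+1) → ZMod p, (∏ i, g (c i) ^ 2) *
      ∑ a, (g a - g (-(∑ i, c i) - a))^2 = ∑ c : Fin k → ZMod p, (∏ i, g (c i) ^ 2) *
      ∑ y, g y ^ 2 * ∑ a, (g a - g (-(y + ∑ i, c i) - a))^2 := by
    rw [← (Fin.consEquiv (fun _ : Fin (k+1) => ZMod p)).sum_comp, Fintype.sum_prod_type_right]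
    refine Finset.sum_congr rfl fun c _ => ?_
    rw [Finset.mul_sum]
    refine Finset.sum_congr rfl fun y _ => ?_
    simp only [Fin.consEquiv_apply, Fin.prod_univ_succ, Fin.sum_univ_succ, Fin.cons_zero,
      Fin.cons_succ]
    ring
  have key : ∀ s : ZMod p, psbD g ≤ 4 * ∑ y, g y ^ 2 * ∑ a, (g a - g (-(y + s) - a))^2 := by
    intro s
    set K : ZMod p → ℝ := fun y => ∑ a, (g a - g (-(y + s) - a))^2 with hK
    have h2 : ∀ x, ∑ b, g b ^ 2 * psbPhi g (b - x) ≤ 2 * ∑ b, g b ^ 2 * K b + 2 * K x := by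
      intro x
      calc _ ≤ ∑ b, (2 * (g b ^ 2 * K b) + g b ^ 2 * (2 * K x)) := by
            refine Finset.sum_le_sum fun b _ => ?_
            have := psb_K g (b + s) (x + s)
            rw [add_sub_add_right_eq_sub] at this
            have := mul_le_mul_of_nonneg_left this (sq_nonneg (g b))
            simp only [hK]
            linarith
        _ = _ := by rw [Finset.sum_add_distrib, ← Finset.mul_sum, ← Finset.sum_mul, h1, one_mul]
    calc psbD g ≤ ∑ x, (g x ^ 2 * (2 * ∑ b, g b ^ 2 * K b) + 2 * (g x ^ 2 * K x)) := by
          refine Finset.sum_le_sum fun x _ => ?_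
          have := mul_le_mul_of_nonneg_left (h2 x) (sq_nonneg (g x))
          linarith
      _ = _ := by
          rw [Finset.sum_add_distrib, ← Finset.mul_sum, ← Finset.sum_mul, h1, one_mul]; ring
  rw [e, Finset.mul_sum]
  have hone : ∑ c : Fin k → ZMod p, ∏ i, g (c i) ^ 2 = 1 := by
    have := Fintype.sum_pow (fun a => g a ^ 2) k
    rw [h1, one_pow] at this
    exact this.symm
  calc psbD g = ∑ c : Fin k → ZMod p, (∏ i, g (c i) ^ 2) * psbD g := by
        rw [← Finset.sum_mul, hone, one_mul]
    _ ≤ _ := by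
        refine Finset.sum_le_sum fun c _ => ?_
        have := mul_le_mul_of_nonneg_left (key (∑ i, c i))
          (Finset.prod_nonneg fun i (_ : i ∈ univ) => sq_nonneg (g (c i)))
        linarith

lemma psb_E {p : ℕ} [Fact p.Prime] (k : ℕ) (hpd : Nat.gcd p (k+3) = 1) (g : ZMod p → ℝ)
    (hg : ∀ a, 0 ≤ g a) (h1 : ∑ a, g a ^ 2 = 1) (δ : ℝ) (hδ : 0 < δ) (hδ1 : δ < 1)
    (hj : ∃ j, δ / p < |g j ^ 2 - 1 / p|) (h0 : g 0 ^ 2 < 1 - δ / p) :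
    (δ^2 / (163840 * 2^(k+1))) / p ≤ ∑ c : Fin (k+1) → ZMod p, (∏ i, g (c i) ^ 2) *
      ∑ a, (g a - g (-(∑ i, c i) - a))^2 := by
  have hpr : p.Prime := Fact.out
  have hp1 : (1:ℝ) ≤ p := by exact_mod_cast hpr.one_lt.le
  have hp : (0:ℝ) < p := by linarith
  have hDE := psb_DE g h1 k
  set E := ∑ c : Fin (k+1) → ZMod p, (∏ i, g (c i) ^ 2) *
      ∑ a, (g a - g (-(∑ i, c i) - a))^2 with hE
  have h2k : (1:ℝ) ≤ 2^(k+1) := one_le_pow₀ (by norm_num)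
  have hδ2 : δ^2 ≤ δ := by nlinarith
  have hdiv : δ^2 / (163840 * 2^(k+1)) ≤ δ^2 / 163840 := by
    apply div_le_div_of_nonneg_left (by positivity) (by norm_num); linarith
  have hdp : (δ^2 / (163840 * 2^(k+1))) / p ≤ (δ^2 / 163840) / p := by gcongr
  rcases le_or_gt (1/40960) (psbD g) with hbig | hsmall
  · have : (δ^2 / 163840) / p ≤ 1 / 163840 := by
      rw [div_le_iff₀ hp]
      nlinarith
    linarith
  rcases psb_dich g h1 hsmall with ⟨x, hx⟩ | hu
  · by_cases hx0 : x = 0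
    · subst hx0
      have : (δ^2 / 163840) / p ≤ (δ / p) / 163840 := by
        rw [div_right_comm]; gcongr
      have : 0 < δ / p := by positivity
      linarith
    · -- concentrated at a nonzero residue
      have hgx : (9/10 : ℝ) ≤ g x ^ 2 := by linarith
      set y : ZMod p := -(∑ i : Fin (k+1), x) - x with hy
      have hyx : y ≠ x := by
        intro h
        have h3 : ((k + 3 : ℕ) : ZMod p) * x = 0 := by
          rw [hy] at h
          simp at h
          push_cast
          linear_combination -h
        rcases mul_eq_zero.1 h3 with h4 | h4
        · rw [ZMod.natCast_eq_zero_iff] at h4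
          have := Nat.gcd_eq_left h4
          rw [hpd] at this
          exact hpr.one_lt.ne this
        · exact hx0 h4
      have hgy : g y ^ 2 ≤ 1/10 := by
        have : g y ^ 2 + g x ^ 2 ≤ 1 := by
          rw [← h1, ← Finset.sum_pair (f := fun a => g a ^ 2) hyx]
          exact Finset.sum_le_sum_of_subset_of_nonneg (subset_univ _) fun _ _ _ => sq_nonneg _
        linarith
      have ha : (9/10:ℝ) ≤ g x := by
        have := hg x
        nlinarith
      have hb : g y ≤ 4/10 := by
        have := hg y
        nlinarith
      have hsq : (1/4:ℝ) ≤ (g x - g y)^2 := by nlinarith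
      have hterm : (1/2:ℝ)^(k+1) * (1/4) ≤ E := by
        calc (1/2:ℝ)^(k+1) * (1/4) ≤ (g x ^ 2)^(k+1) * (g x - g y)^2 := by
              gcongr; linarith
          _ ≤ (∏ i : Fin (k+1), g ((fun _ => x : Fin (k+1) → ZMod p) i) ^ 2) *
              ∑ a, (g a - g (-(∑ i : Fin (k+1), (fun _ => x : Fin (k+1) → ZMod p) i) - a))^2 := by
              rw [Finset.prod_const, Finset.card_univ, Fintype.card_fin]
              refine mul_le_mul_of_nonneg_left ?_ (by positivity)
              exact Finset.single_le_sum
                (f := fun a => (g a - g (-(∑ i : Fin (k+1), x) - a))^2)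
                (fun _ _ => sq_nonneg _) (mem_univ x)
          _ ≤ E := Finset.single_le_sum
                (f := fun c : Fin (k+1) → ZMod p => (∏ i, g (c i) ^ 2) *
                  ∑ a, (g a - g (-(∑ i, c i) - a))^2)
                (fun c _ => mul_nonneg (Finset.prod_nonneg fun _ _ => sq_nonneg _)
                  (Finset.sum_nonneg fun _ _ => sq_nonneg _)) (mem_univ (fun _ => x))
      refine le_trans ?_ hterm
      rw [div_le_iff₀ hp, one_div, inv_pow, ← div_div, div_eq_mul_inv (δ^2 / 163840)]
      have : 0 < ((2:ℝ)^(k+1))⁻¹ := by positivity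
      have h5 : δ^2 / 163840 ≤ 1/4 * p := by nlinarith
      nlinarith
  · obtain ⟨j, hj⟩ := hj
    have h6 := psb_M g hg h1 j δ hδ hδ1 hj
    have h7 := psb_unif g h1 hu
    have : (δ^2 / 163840) / p ≤ δ^2 / (9 * p) / 2 / 4 := by
      rw [div_div, div_div, div_div]
      apply div_le_div_of_nonneg_left (by positivity) (by positivity)
      linarith
    linarith

/-- For `d ≥ 3` there is `δ₀ > 0` such that for all `δ ∈ (0, δ₀)` there is `c(δ) > 0` with:
for every prime `p` with `gcd(p,d) = 1` and every probability vector `𝔫` on `{0,…,p-1}`,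
if `max_j |𝔫_j - 1/p| > δ/p` and `𝔫_0 < 1 - δ/p`, then
`Σ_{a ∈ Z_{d,p}} ∏_{r=1}^d 𝔫_{a_r}^{(d-1)/d} ≤ 1 - c(δ)/p`. -/
theorem power_sum_bound (d : ℕ) (hd : 3 ≤ d) :
    ∃ δ₀ : ℝ, 0 < δ₀ ∧ ∀ δ : ℝ, 0 < δ → δ < δ₀ → ∃ c : ℝ, 0 < c ∧
      ∀ (p : ℕ) [Fact p.Prime], Nat.gcd p d = 1 →
        ∀ 𝔫 : ZMod p → ℝ, (∀ j, 0 ≤ 𝔫 j) → (∑ j, 𝔫 j) = 1 →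
        (∃ j, δ / p < |𝔫 j - 1 / p|) → 𝔫 0 < 1 - δ / p →
        (∑ a ∈ Finset.univ.filter (fun a : Fin d → ZMod p => ∑ r, a r = 0),
            ∏ r : Fin d, (𝔫 (a r)) ^ (((d : ℝ) - 1) / d))
          ≤ 1 - c / p := by
  obtain ⟨k, rfl⟩ : ∃ k, d = k + 3 := ⟨d - 3, by omega⟩
  refine ⟨1, one_pos, fun δ hδ hδ1 =>
    ⟨δ^2 / (163840 * 2^(k+1)) / ((k:ℝ)+3), by positivity, ?_⟩⟩
  intro p _ hpd n hn h1 hj h0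
  have hs : ∀ a, √(n a) ^ 2 = n a := fun a => Real.sq_sqrt (hn a)
  have hE := psb_E k hpd (fun a => √(n a)) (fun a => Real.sqrt_nonneg _)
    (by simpa only [hs] using h1) δ hδ hδ1 (by simpa only [hs] using hj)
    (by simpa only [hs] using h0)
  simp only [hs] at hE
  have hgap := psb_gap (k+1) n hn h1
  have e1 : (((k+1 : ℕ) : ℝ) + 1) / (((k+1 : ℕ) : ℝ) + 2) =
      (((k + 3 : ℕ) : ℝ) - 1) / ((k + 3 : ℕ) : ℝ) := by
    push_cast; congr 1 <;> ring
  have e2 : ((k+1 : ℕ) : ℝ) + 2 = (k:ℝ) + 3 := by push_cast; ring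
  rw [e1, e2] at hgap
  refine hgap.trans ?_
  rw [div_right_comm]
  have hk : (0:ℝ) < (k:ℝ) + 3 := by positivity
  exact sub_le_sub_left (div_le_div_of_nonneg_right hE hk.le) 1
end
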